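/- Let G=(V,p,μ) be a weighted graph with bounded geometry with constant α>0 satisfying CD(K,∞) for some K≥0. Let u₀∈L^∞(V,μ) with ‖Γu₀‖_∞ < α/2. Then there exists a unique solution u:[0,∞)→L^∞(V,μ) of the modified heat equation with initial data u₀, and this solution satisfies ‖Γ(u(t))‖_∞ ≤ e^{−2Kt}·‖Γu₀‖_∞ for all t≥0. -/

import Mathlib

/-- A weighted graph `G = (V, p, μ)`: a nonnegative kernel `p` and a positive
measure `μ` on the vertex set `V`, such that `G` is locally finite, `p` is a
Markov kernel, and `G` is connected.  Vertices `x, y` are neighbours (`x ∼ y`)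
iff `0 < p x y`. -/
structure WeightedGraph (V : Type*) where
  p : V → V → ℝ
  μ : V → ℝ
  p_nonneg : ∀ x y, 0 ≤ p x y
  μ_pos : ∀ x, 0 < μ x
  locallyFinite : ∀ x, {y | 0 < p x y}.Finite
  markov : ∀ x, HasSum (p x) 1
  connected : ∀ x y : V, ∃ n : ℕ, ∃ c : Fin (n + 1) → V,
      c 0 = x ∧ c (Fin.last n) = y ∧ ∀ i : Fin n, 0 < p (c i.castSucc) (c i.succ)

namespace WeightedGraph

variable {V : Type*} (G : WeightedGraph V)

/-- The Laplacian `Δ f (x) = ∑_{y ∼ x} p x y * (f y - f x)`.  (Summing over all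
of `V` is the same, since `p x y = 0` unless `y ∼ x`.) -/
noncomputable def lap (f : V → ℝ) (x : V) : ℝ := ∑' y, G.p x y * (f y - f x)

/-- The carré du champ `Γ f (x) = (1/2) ∑_{y ∼ x} p x y * (f y - f x)^2`. -/
noncomputable def gamma (f : V → ℝ) (x : V) : ℝ := (1 / 2) * ∑' y, G.p x y * (f y - f x) ^ 2

/-- The bilinear carré du champ
`Γ(f,g)(x) = (1/2) ∑_{y ∼ x} p x y * (f y - f x) * (g y - g x)`. -/
noncomputable def gammaBil (f g : V → ℝ) (x : V) : ℝ :=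
  (1 / 2) * ∑' y, G.p x y * (f y - f x) * (g y - g x)

/-- The iterated carré du champ `Γ₂ f = (1/2) Δ (Γ f) - Γ(f, Δ f)`. -/
noncomputable def gamma2 (f : V → ℝ) (x : V) : ℝ :=
  (1 / 2) * G.lap (G.gamma f) x - G.gammaBil f (G.lap f) x

/-- Bounded geometry with constant `α > 0`: the uniform ellipticity condition (A1)
`p x y ≥ α` whenever `x ∼ y`, and the reversibility condition (A2)
`p x y * μ x = p y x * μ y`. -/
def BoundedGeometry (α : ℝ) : Prop :=
  0 < α ∧ (∀ x y, 0 < G.p x y → α ≤ G.p x y) ∧ ∀ x y, G.p x y * G.μ x = G.p y x * G.μ y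

/-- The Bakry–Émery curvature-dimension condition `CD(K, n)`:
`Γ₂ f ≥ (1/n) (Δ f)² + K Γ f`. -/
def CD (K : ℝ) (n : ℕ) : Prop :=
  ∀ f : V → ℝ, ∀ x : V, (1 / (n : ℝ)) * G.lap f x ^ 2 + K * G.gamma f x ≤ G.gamma2 f x

/-- The Bakry–Émery curvature-dimension condition `CD(K, ∞)`: `Γ₂ f ≥ K Γ f`. -/
def CDInfty (K : ℝ) : Prop :=
  ∀ f : V → ℝ, ∀ x : V, K * G.gamma f x ≤ G.gamma2 f x

/-- The graph distance `d(x,y)`: the least length of a path of consecutive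
neighbours joining `x` to `y` (and `0` if `x = y`). -/
noncomputable def dist (x y : V) : ℕ :=
  sInf {n : ℕ | ∃ c : Fin (n + 1) → V,
    c 0 = x ∧ c (Fin.last n) = y ∧ ∀ i : Fin n, 0 < G.p (c i.castSucc) (c i.succ)}

/-- The measure `μ(B(x,r)) = ∑_{y : d(x,y) ≤ r} μ y` of the closed ball `B(x,r)`. -/
noncomputable def ballMeasure (x : V) (r : ℝ) : ℝ :=
  ∑' y : {y : V // (G.dist x y : ℝ) ≤ r}, G.μ y

end WeightedGraph

/-- The sup norm `‖f‖_∞ = sup_x |f x|` of a (bounded) function on `V`. -/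
noncomputable def supNorm {V : Type*} (f : V → ℝ) : ℝ := ⨆ x, |f x|

/-- The space `L^∞(V, μ)` of bounded functions on `V`, with the sup norm
`‖f‖_∞ = sup_x |f x|`. -/
noncomputable abbrev Linf (V : Type*) := lp (fun _ : V => ℝ) ⊤

/-- `u : [0,∞) → L^∞(V,μ)` is a solution of the modified heat equation
`∂ₜ u = Δ u + Γ u` with initial data `u₀` and derivative `u'`: `u` is continuous
on `[0,∞)`, differentiable on `(0,∞)` with derivative `u'` continuous there,
`u 0 = u₀`, and `u' t = Δ (u t) + Γ (u t)` for all `t > 0`. -/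
structure IsMHESolution {V : Type*} (G : WeightedGraph V) (u u' : ℝ → Linf V)
    (u₀ : Linf V) : Prop where
  init : u 0 = u₀
  cont : ContinuousOn u (Set.Ici 0)
  derivCont : ContinuousOn u' (Set.Ioi 0)
  hasDeriv : ∀ t > (0 : ℝ), HasDerivAt u (u' t) t
  eqn : ∀ t > (0 : ℝ), ∀ x : V, u' t x = G.lap (fun y => u t y) x + G.gamma (fun y => u t y) x

section MHEProof

open Set Filter Topology

/-- Global existence for an autonomous ODE with bounded Lipschitz right-hand side. -/
theorem mhe_global_ode {E : Type*} [NormedAddCommGroup E] [NormedSpace ℝ E] [CompleteSpace E]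
    (F : E → E) (C L : NNReal) (hF : LipschitzWith C F) (hL : ∀ x, ‖F x‖ ≤ L) (x₀ : E) :
    ∃ u : ℝ → E, u 0 = x₀ ∧ ∀ t, HasDerivAt u (F (u t)) t := by
  have loc : ∀ n : ℕ, ∃ u : ℝ → E, u 0 = x₀ ∧
      ∀ t ∈ Ioo (-((n : ℝ) + 1)) ((n : ℝ) + 1), HasDerivAt u (F (u t)) t := by
    intro n
    have hn : (0 : ℝ) ≤ (n : ℝ) + 1 := by positivity
    have hpl : IsPicardLindelof (fun _ => F) (tmin := -((n : ℝ) + 1)) (tmax := (n : ℝ) + 1)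
        ⟨0, by constructor <;> linarith⟩ x₀ (L * ((n : NNReal) + 1)) 0 L C := by
      refine ⟨fun t _ => hF.lipschitzOnWith, fun x _ => continuousOn_const, fun t _ x _ => hL x, ?_⟩
      simp
    obtain ⟨u, hu0, hu⟩ := hpl.exists_eq_forall_mem_Icc_hasDerivWithinAt₀
    exact ⟨u, hu0, fun t ht => (hu t (Ioo_subset_Icc_self ht)).hasDerivAt (Icc_mem_nhds ht.1 ht.2)⟩
  choose u hu0 hu using loc
  have key : ∀ n m : ℕ, n ≤ m → EqOn (u n) (u m) (Ioo (-((n : ℝ) + 1)) ((n : ℝ) + 1)) := by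
    intro n m hnm
    have hn : (0 : ℝ) < (n : ℝ) + 1 := by positivity
    have hnm' : (n : ℝ) ≤ m := by exact_mod_cast hnm
    refine ODE_solution_unique_of_mem_Ioo (v := fun _ => F) (s := fun _ => univ) (K := C) (t₀ := 0)
      (fun t _ => hF.lipschitzOnWith) ⟨by linarith, hn⟩ (fun t ht => ⟨hu n t ht, mem_univ _⟩)
      (fun t ht => ⟨hu m t ⟨by linarith [ht.1], by linarith [ht.2]⟩, mem_univ _⟩) ?_
    rw [hu0, hu0]
  have mem : ∀ s : ℝ, s ∈ Ioo (-((⌈|s|⌉₊ : ℝ) + 1)) ((⌈|s|⌉₊ : ℝ) + 1) := by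
    intro s
    have h := Nat.le_ceil |s|
    exact abs_lt.1 (by linarith)
  refine ⟨fun t => u ⌈|t|⌉₊ t, hu0 _, fun t => ?_⟩
  refine (hu _ t (mem t)).congr_of_eventuallyEq ?_
  filter_upwards [Ioo_mem_nhds (mem t).1 (mem t).2] with s hs
  rcases le_total ⌈|s|⌉₊ ⌈|t|⌉₊ with h | h
  · exact key _ _ h (mem s)
  · exact (key _ _ h hs).symm

/-- Forward uniqueness for an autonomous ODE with Lipschitz right-hand side. -/
theorem mhe_ode_unique {E : Type*} [NormedAddCommGroup E] [NormedSpace ℝ E]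
    (F : E → E) (C : NNReal) (hF : LipschitzWith C F) (u v : ℝ → E) (T : ℝ)
    (huc : ContinuousOn u (Icc 0 T)) (hvc : ContinuousOn v (Icc 0 T))
    (hu : ∀ t ∈ Ioo 0 T, HasDerivAt u (F (u t)) t)
    (hv : ∀ t ∈ Ioo 0 T, HasDerivAt v (F (v t)) t) (h0 : u 0 = v 0) :
    EqOn u v (Icc 0 T) := by
  have right : ∀ w : ℝ → E, ContinuousOn w (Icc 0 T) →
      (∀ t ∈ Ioo 0 T, HasDerivAt w (F (w t)) t) →
      ∀ t ∈ Ico 0 T, HasDerivWithinAt w (F (w t)) (Ici t) t := by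
    intro w hwc hw t ht
    rcases ht.1.eq_or_lt with rfl | hpos
    · have hT : (0 : ℝ) < T := ht.2
      have hc : ContinuousWithinAt w (Ioo 0 T) 0 :=
        (hwc 0 ⟨le_rfl, hT.le⟩).mono Ioo_subset_Icc_self
      refine hasDerivWithinAt_Ici_of_tendsto_deriv (s := Ioo 0 T)
        (fun t ht => (hw t ht).differentiableAt.differentiableWithinAt) hc
        (Ioo_mem_nhdsGT hT) ?_
      have h1 : Tendsto (fun t => F (w t)) (𝓝[Ioo 0 T] 0) (𝓝 (F (w 0))) :=
        (hF.continuous.tendsto _).comp hc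
      rw [nhdsWithin_Ioo_eq_nhdsGT hT] at h1
      refine h1.congr' ?_
      filter_upwards [Ioo_mem_nhdsGT hT] with t ht
      exact (hw t ht).deriv.symm
    · exact (hw t ⟨hpos, ht.2⟩).hasDerivWithinAt
  exact ODE_solution_unique_of_mem_Icc_right (v := fun _ => F) (s := fun _ => univ) (K := C)
    (fun t _ => hF.lipschitzOnWith) huc (right u huc hu) (fun _ _ => mem_univ _)
    hvc (right v hvc hv) (fun _ _ => mem_univ _) h0

namespace WeightedGraph

variable {V : Type*} (G : WeightedGraph V)

theorem summ (x : V) (f : V → ℝ) : Summable fun y => G.p x y * f y := by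
  refine summable_of_hasFiniteSupport ((G.locallyFinite x).subset ?_)
  intro y hy
  have h : G.p x y ≠ 0 := fun h => hy (by simp [h])
  exact lt_of_le_of_ne (G.p_nonneg x y) h.symm

/-- averaging -/
noncomputable def avg (x : V) (f : V → ℝ) : ℝ := ∑' y, G.p x y * f y

theorem avg_add (x : V) (f g : V → ℝ) :
    G.avg x (fun y => f y + g y) = G.avg x f + G.avg x g := by
  unfold avg
  rw [← (G.summ x f).tsum_add (G.summ x g)]
  simp only [mul_add]

theorem avg_sub (x : V) (f g : V → ℝ) :
    G.avg x (fun y => f y - g y) = G.avg x f - G.avg x g := by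
  unfold avg
  rw [← (G.summ x f).tsum_sub (G.summ x g)]
  simp only [mul_sub]

theorem avg_smul (x : V) (c : ℝ) (f : V → ℝ) :
    G.avg x (fun y => c * f y) = c * G.avg x f := by
  unfold avg
  rw [← tsum_mul_left]
  simp only [mul_left_comm]

theorem avg_const (x : V) (c : ℝ) : G.avg x (fun _ => c) = c := by
  unfold avg
  rw [tsum_mul_right, (G.markov x).tsum_eq, one_mul]

theorem avg_mono (x : V) (f g : V → ℝ) (h : ∀ y, 0 < G.p x y → f y ≤ g y) :
    G.avg x f ≤ G.avg x g := by
  refine (G.summ x f).tsum_le_tsum (fun y => ?_) (G.summ x g)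
  rcases (G.p_nonneg x y).eq_or_lt with h0 | h0
  · simp [← h0]
  · exact mul_le_mul_of_nonneg_left (h y h0) h0.le

theorem avg_congr (x : V) (f g : V → ℝ) (h : ∀ y, 0 < G.p x y → f y = g y) :
    G.avg x f = G.avg x g :=
  le_antisymm (G.avg_mono x f g fun y hy => (h y hy).le)
    (G.avg_mono x g f fun y hy => (h y hy).ge)

theorem abs_avg_le (x : V) (f : V → ℝ) (c : ℝ) (h : ∀ y, |f y| ≤ c) : |G.avg x f| ≤ c := by
  rw [abs_le]
  constructor
  · rw [← G.avg_const x (-c)]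
    exact G.avg_mono x _ _ fun y _ => (abs_le.1 (h y)).1
  · rw [← G.avg_const x c]
    exact G.avg_mono x _ _ fun y _ => (abs_le.1 (h y)).2

theorem lap_eq (f : V → ℝ) (x : V) : G.lap f x = G.avg x (fun y => f y - f x) := rfl

theorem gamma_eq (f : V → ℝ) (x : V) :
    G.gamma f x = (1 / 2) * G.avg x (fun y => (f y - f x) ^ 2) := rfl

theorem gammaBil_eq (f g : V → ℝ) (x : V) :
    G.gammaBil f g x = (1 / 2) * G.avg x (fun y => (f y - f x) * (g y - g x)) := by
  simp only [gammaBil, avg, mul_assoc]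

end WeightedGraph

theorem Linf_apply_le {V : Type*} (f : Linf V) (x : V) : |f x| ≤ ‖f‖ :=
  lp.norm_apply_le_norm ENNReal.top_ne_zero f x

theorem Linf_norm_le {V : Type*} (f : Linf V) (c : ℝ) (hc : 0 ≤ c) (h : ∀ x, |f x| ≤ c) :
    ‖f‖ ≤ c := lp.norm_le_of_forall_le hc h

theorem Linf_osc_le {V : Type*} (f : Linf V) (x y : V) : |f y - f x| ≤ 2 * ‖f‖ := by
  have h1 := Linf_apply_le f x
  have h2 := Linf_apply_le f y
  have := abs_sub (f y) (f x)
  linarith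

theorem supNorm_eq {V : Type*} (f : Linf V) : supNorm (fun x => f x) = ‖f‖ := rfl

/-- A bounded function as an element of `Linf`. -/
noncomputable def mkLinf {V : Type*} (f : V → ℝ) (c : ℝ) (h : ∀ x, |f x| ≤ c) : Linf V :=
  ⟨f, memℓp_infty ⟨c, by rintro _ ⟨x, rfl⟩; exact h x⟩⟩

/-- Truncation of `s` to `[-R, R]`. -/
noncomputable def mheClamp (R s : ℝ) : ℝ := max (-R) (min R s)

theorem mheClamp_abs_le (R s : ℝ) (hR : 0 ≤ R) : |mheClamp R s| ≤ R := by
  unfold mheClamp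
  rw [abs_le]
  exact ⟨le_max_left _ _, max_le (by linarith) (min_le_left _ _)⟩

theorem mheClamp_of_abs_le (R s : ℝ) (h : |s| ≤ R) : mheClamp R s = s := by
  unfold mheClamp
  rw [abs_le] at h
  rw [min_eq_right h.2, max_eq_right h.1]

theorem mheClamp_lip (R s t : ℝ) : |mheClamp R s - mheClamp R t| ≤ |s - t| := by
  unfold mheClamp
  refine (abs_max_sub_max_le_max _ _ _ _).trans ?_
  rw [sub_self, abs_zero]
  refine max_le (abs_nonneg _) ((abs_min_sub_min_le_max _ _ _ _).trans ?_)
  rw [sub_self, abs_zero]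
  exact max_le (abs_nonneg _) le_rfl

/-- Truncated nonlinearity. -/
noncomputable def mheK (R s : ℝ) : ℝ := mheClamp R s + (1 / 2) * mheClamp R s ^ 2

theorem mheK_abs_le (R s : ℝ) (hR : 0 ≤ R) : |mheK R s| ≤ R + (1 / 2) * R ^ 2 := by
  have h := abs_le.1 (mheClamp_abs_le R s hR)
  unfold mheK
  rw [abs_le]
  constructor <;> nlinarith

theorem mheK_lip (R s t : ℝ) (hR : 0 ≤ R) : |mheK R s - mheK R t| ≤ (1 + R) * |s - t| := by
  have h1 := mheClamp_abs_le R s hR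
  have h2 := mheClamp_abs_le R t hR
  have h3 := mheClamp_lip R s t
  unfold mheK
  generalize mheClamp R s = a at *
  generalize mheClamp R t = b at *
  have e : a + 1 / 2 * a ^ 2 - (b + 1 / 2 * b ^ 2) = (1 + (a + b) / 2) * (a - b) := by ring
  rw [e, abs_mul]
  refine mul_le_mul ?_ h3 (abs_nonneg _) (by linarith)
  rw [abs_le] at *
  constructor <;> linarith

namespace WeightedGraph

variable {V : Type*} (G : WeightedGraph V)

/-- The truncated vector field. -/
noncomputable def field (R : ℝ) (hR : 0 ≤ R) (f : Linf V) : Linf V :=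
  mkLinf (fun x => G.avg x (fun y => mheK R (f y - f x))) (R + (1 / 2) * R ^ 2)
    (fun x => G.abs_avg_le x _ _ fun _ => mheK_abs_le R _ hR)

theorem field_apply (R : ℝ) (hR : 0 ≤ R) (f : Linf V) (x : V) :
    G.field R hR f x = G.avg x (fun y => mheK R (f y - f x)) := rfl

theorem field_norm_le (R : ℝ) (hR : 0 ≤ R) (f : Linf V) :
    ‖G.field R hR f‖ ≤ R + (1 / 2) * R ^ 2 :=
  Linf_norm_le _ _ (by positivity) fun x => by
    rw [field_apply]
    exact G.abs_avg_le x _ _ fun _ => mheK_abs_le R _ hR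

theorem field_lip (R : ℝ) (hR : 0 ≤ R) :
    LipschitzWith (Real.toNNReal ((1 + R) * 2)) (G.field R hR) := by
  refine LipschitzWith.of_dist_le_mul fun f g => ?_
  rw [dist_eq_norm, dist_eq_norm, Real.coe_toNNReal _ (by positivity)]
  refine Linf_norm_le _ _ (by positivity) fun x => ?_
  rw [lp.coeFn_sub, Pi.sub_apply, field_apply, field_apply, ← avg_sub]
  refine G.abs_avg_le x _ _ fun y => (mheK_lip R _ _ hR).trans ?_
  rw [mul_assoc]
  refine mul_le_mul_of_nonneg_left ?_ (by linarith)
  have := Linf_osc_le (f - g) x y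
  rw [lp.coeFn_sub, Pi.sub_apply, Pi.sub_apply] at this
  rwa [sub_sub_sub_comm]

theorem field_eq (R : ℝ) (hR : 0 ≤ R) (f : Linf V) (x : V)
    (h : ∀ y, 0 < G.p x y → |f y - f x| ≤ R) :
    G.field R hR f x = G.lap (fun y => f y) x + G.gamma (fun y => f y) x := by
  rw [field_apply, lap_eq, gamma_eq, ← avg_smul, ← avg_add]
  refine G.avg_congr x _ _ fun y hy => ?_
  rw [mheK, mheClamp_of_abs_le R _ (h y hy)]

/-- The bilinear carré du champ as a continuous bilinear map. -/
noncomputable def bil : Linf V →L[ℝ] Linf V →L[ℝ] Linf V :=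
  LinearMap.mkContinuous₂
    (LinearMap.mk₂ ℝ
      (fun f g => mkLinf (fun x => (1 / 2) * G.avg x (fun y => (f y - f x) * (g y - g x)))
        (2 * ‖f‖ * ‖g‖) (fun x => by
          have := G.abs_avg_le x (fun y => (f y - f x) * (g y - g x)) ((2 * ‖f‖) * (2 * ‖g‖))
            fun y => by
              rw [abs_mul]
              exact mul_le_mul (Linf_osc_le f x y) (Linf_osc_le g x y) (abs_nonneg _)
                (by positivity)
          rw [abs_mul, abs_of_pos (by norm_num : (0 : ℝ) < 1 / 2)]
          linarith))
      (fun f f' g => by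
        ext x
        change (1 / 2) * G.avg x _ = (1 / 2) * G.avg x _ + (1 / 2) * G.avg x _
        rw [← mul_add, ← avg_add]
        congr 2
        funext y
        simp only [lp.coeFn_add, Pi.add_apply]
        ring)
      (fun c f g => by
        ext x
        change (1 / 2) * G.avg x _ = c * ((1 / 2) * G.avg x _)
        rw [mul_left_comm c, ← G.avg_smul x c]
        congr 2
        funext y
        simp only [lp.coeFn_smul, Pi.smul_apply, smul_eq_mul]
        ring)
      (fun f g g' => by
        ext x
        change (1 / 2) * G.avg x _ = (1 / 2) * G.avg x _ + (1 / 2) * G.avg x _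
        rw [← mul_add, ← avg_add]
        congr 2
        funext y
        simp only [lp.coeFn_add, Pi.add_apply]
        ring)
      (fun c f g => by
        ext x
        change (1 / 2) * G.avg x _ = c * ((1 / 2) * G.avg x _)
        rw [mul_left_comm c, ← G.avg_smul x c]
        congr 2
        funext y
        simp only [lp.coeFn_smul, Pi.smul_apply, smul_eq_mul]
        ring))
    2 (fun f g => Linf_norm_le _ _ (by positivity) fun x => by
        have := G.abs_avg_le x (fun y => (f y - f x) * (g y - g x)) ((2 * ‖f‖) * (2 * ‖g‖))
            fun y => by
              rw [abs_mul]
              exact mul_le_mul (Linf_osc_le f x y) (Linf_osc_le g x y) (abs_nonneg _)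
                (by positivity)
        change |(1 / 2) * G.avg x (fun y => (f y - f x) * (g y - g x))| ≤ _
        rw [abs_mul, abs_of_pos (by norm_num : (0 : ℝ) < 1 / 2)]
        linarith)

theorem bil_apply (f g : Linf V) (x : V) :
    G.bil f g x = (1 / 2) * G.avg x (fun y => (f y - f x) * (g y - g x)) := rfl

theorem bil_eq_gammaBil (f g : Linf V) (x : V) :
    G.bil f g x = G.gammaBil (fun y => f y) (fun y => g y) x := by
  rw [bil_apply, gammaBil_eq]

theorem bil_symm (f g : Linf V) : G.bil f g = G.bil g f := by
  ext x
  rw [bil_apply, bil_apply]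
  simp only [mul_comm]

theorem bil_self (f : Linf V) (x : V) : G.bil f f x = G.gamma (fun y => f y) x := by
  rw [bil_apply, gamma_eq]
  simp only [sq]

theorem bil_self_fun (f : Linf V) : (fun x => G.bil f f x) = G.gamma (fun y => f y) :=
  funext fun x => G.bil_self f x

theorem bil_self_nonneg (f : Linf V) (x : V) : 0 ≤ G.bil f f x := by
  rw [bil_apply, ← G.avg_const x 0]
  simp only [← sq]
  have := G.avg_mono x (fun _ => 0) (fun y => (f y - f x) ^ 2) fun y _ => sq_nonneg _
  rw [avg_const] at this ⊢
  positivity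

theorem supNorm_gamma (f : Linf V) : supNorm (G.gamma (fun y => f y)) = ‖G.bil f f‖ := by
  rw [← bil_self_fun]
  rfl

/-- The gradient bound coming from `Γ f ≤ α / 2`. -/
theorem osc_le_one (α : ℝ) (hbg : G.BoundedGeometry α) (f : Linf V) (h : ‖G.bil f f‖ ≤ α / 2)
    (x y : V) (hxy : 0 < G.p x y) : |f y - f x| ≤ 1 := by
  obtain ⟨hα, hell, -⟩ := hbg
  have h1 : G.bil f f x ≤ α / 2 := ((le_abs_self _).trans (Linf_apply_le _ x)).trans h
  rw [bil_self, gamma_eq] at h1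
  have h2 : G.p x y * (f y - f x) ^ 2 ≤ G.avg x (fun y => (f y - f x) ^ 2) :=
    (G.summ x (fun y => (f y - f x) ^ 2)).le_tsum y
      fun z _ => mul_nonneg (G.p_nonneg x z) (sq_nonneg _)
  have h3 : α * (f y - f x) ^ 2 ≤ α * 1 := by
    have := mul_le_mul_of_nonneg_right (hell x y hxy) (sq_nonneg (f y - f x))
    linarith
  have h4 := le_of_mul_le_mul_left h3 hα
  exact (sq_le_one_iff_abs_le_one _).1 h4

/-- One infinitesimal Euler step does not increase `‖Γ‖` beyond the exponential rate. -/
theorem euler_step (α K : ℝ) (hbg : G.BoundedGeometry α) (hCD : G.CDInfty K)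
    (f : Linf V) (h : ‖G.bil f f‖ ≤ α / 2) (x : V) (τ : ℝ) (hτ : 0 ≤ τ)
    (hτ1 : τ * (1 + 2 * K) + τ ≤ 1) :
    G.bil f f x + τ * (2 * G.bil f (G.field 1 zero_le_one f) x) ≤ (1 - 2 * K * τ) * ‖G.bil f f‖ := by
  set w := G.bil f f with hw
  have hosc := G.osc_le_one α hbg f h
  have e1 : G.field 1 zero_le_one f =
      fun x => G.lap (fun y => f y) x + G.gamma (fun y => f y) x :=
    funext fun x => G.field_eq 1 zero_le_one f x (hosc x)
  have e2 : G.bil f (G.field 1 zero_le_one f) x =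
      G.gammaBil (fun y => f y) (G.lap (fun y => f y)) x + (1 / 2) * G.avg x
        (fun y => (f y - f x) * (w y - w x)) := by
    rw [bil_apply, gammaBil_eq, ← mul_add, ← avg_add, e1]
    congr 2
    funext y
    rw [hw, bil_self, bil_self]
    ring
  have hcd := hCD (fun y => f y) x
  rw [gamma2, ← bil_self_fun, lap_eq] at hcd
  change K * w x ≤ (1 / 2) * G.avg x (fun y => w y - w x) - _ at hcd
  have e3 : 2 * G.bil f (G.field 1 zero_le_one f) x ≤
      G.avg x (fun y => (1 + (f y - f x)) * (w y - w x)) - 2 * K * w x := by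
    have : G.avg x (fun y => (1 + (f y - f x)) * (w y - w x)) =
        G.avg x (fun y => w y - w x) + G.avg x (fun y => (f y - f x) * (w y - w x)) := by
      rw [← avg_add]
      congr 1
      funext y
      ring
    rw [e2, this]
    linarith
  have e4 : G.avg x (fun y => (1 + (f y - f x)) * (w y - w x)) ≤ 2 * (‖w‖ - w x) := by
    rw [← G.avg_const x (2 * (‖w‖ - w x))]
    refine G.avg_mono x _ _ fun y hy => ?_
    have h1 := abs_le.1 (hosc x y hy)
    have h2 := (le_abs_self _).trans (Linf_apply_le w y)
    have h3 := (le_abs_self _).trans (Linf_apply_le w x)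
    nlinarith
  have e5 := mul_le_mul_of_nonneg_left (e3.trans (sub_le_sub_right e4 _)) hτ
  have h3 := (le_abs_self _).trans (Linf_apply_le w x)
  nlinarith

/-- Exponential decay of `‖Γ u‖` along the truncated flow. -/
theorem gamma_decay (α K : ℝ) (hbg : G.BoundedGeometry α) (hK : 0 ≤ K) (hCD : G.CDInfty K)
    (u : ℝ → Linf V) (hu : ∀ t, HasDerivAt u (G.field 1 zero_le_one (u t)) t)
    (h0 : ‖G.bil (u 0) (u 0)‖ < α / 2) (T : ℝ) (hT : 0 ≤ T) :
    ‖G.bil (u T) (u T)‖ ≤ Real.exp (-2 * K * T) * ‖G.bil (u 0) (u 0)‖ := by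
  set w : ℝ → Linf V := fun t => G.bil (u t) (u t) with hwdef
  set w' : ℝ → Linf V := fun t => G.bil (u t) (G.field 1 zero_le_one (u t)) +
    G.bil (G.field 1 zero_le_one (u t)) (u t) with hw'def
  have hw : ∀ t, HasDerivAt w (w' t) t := fun t => G.bil.hasDerivAt_of_bilinear (fun _ => hu t) (fun _ => hu t)
  have hw'x : ∀ t x, w' t x = 2 * G.bil (u t) (G.field 1 zero_le_one (u t)) x := by
    intro t x
    simp only [hw'def]
    rw [G.bil_symm (G.field 1 zero_le_one (u t)) (u t), lp.coeFn_add, Pi.add_apply]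
    ring
  have hslope : ∀ t, ‖w t‖ ≤ α / 2 → ∀ r, -2 * K * ‖w t‖ < r →
      ∃ᶠ z in 𝓝[>] t, slope (fun s => ‖w s‖) t z < r := by
    intro t ht r hr
    refine Eventually.frequently ?_
    set ε := (r + 2 * K * ‖w t‖) / 2 with hε
    have hεpos : 0 < ε := by linarith
    have h1 : ∀ᶠ z in 𝓝[>] t, ‖w z - w t - (z - t) • w' t‖ ≤ ε * ‖z - t‖ :=
      ((hw t).isLittleO.def hεpos).filter_mono nhdsWithin_le_nhds
    have hc : 0 < 1 / (2 + 2 * K) := by positivity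
    have h2 : ∀ᶠ z in 𝓝[>] t, z ∈ Ioo t (t + 1 / (2 + 2 * K)) :=
      Ioo_mem_nhdsGT (by linarith)
    filter_upwards [h1, h2] with z hz1 hz2
    have hτ : 0 < z - t := by linarith [hz2.1]
    have hτ1 : (z - t) * (2 + 2 * K) ≤ 1 := by
      have : z - t ≤ 1 / (2 + 2 * K) := by linarith [hz2.2]
      rwa [le_div_iff₀ (by positivity)] at this
    rw [Real.norm_eq_abs, abs_of_pos hτ] at hz1
    have hnn : 0 ≤ (1 - 2 * K * (z - t)) * ‖w t‖ :=
      mul_nonneg (by nlinarith) (norm_nonneg _)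
    have hb : ‖w z‖ ≤ (1 - 2 * K * (z - t)) * ‖w t‖ + ε * (z - t) := by
      refine Linf_norm_le _ _ (by positivity) fun x => ?_
      rw [abs_of_nonneg (G.bil_self_nonneg (u z) x)]
      have h3 := (le_abs_self _).trans ((Linf_apply_le (w z - w t - (z - t) • w' t) x).trans hz1)
      simp only [lp.coeFn_sub, Pi.sub_apply, lp.coeFn_smul, Pi.smul_apply, smul_eq_mul] at h3
      rw [hw'x] at h3
      have h4 := G.euler_step α K hbg hCD (u t) ht x (z - t) hτ.le (by linarith)
      have h5 : w t x = G.bil (u t) (u t) x := rfl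
      have h6 : ‖w t‖ = ‖G.bil (u t) (u t)‖ := rfl
      rw [h5] at h3
      rw [h6]
      linarith
    rw [slope_def_field, div_lt_iff₀ hτ]
    nlinarith
  have hwc : Continuous w := continuous_iff_continuousAt.2 fun t => (hw t).continuousAt
  have main : ∀ ε > 0, ‖w 0‖ + ε * T ≤ α / 2 →
      ‖w T‖ ≤ ‖w 0‖ * Real.exp (-2 * K * T) + ε * T := by
    intro ε hε hεT
    have hBd : ∀ t, HasDerivAt (fun t => ‖w 0‖ * Real.exp (-2 * K * t) + ε * t)
        (‖w 0‖ * (Real.exp (-2 * K * t) * (-2 * K)) + ε) t := by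
      intro t
      have h1 : HasDerivAt (fun t : ℝ => -2 * K * t) (-2 * K) t := by
        simpa using (hasDerivAt_id t).const_mul (-2 * K)
      have h2 : HasDerivAt (fun t : ℝ => ε * t) ε t := by
        simpa using (hasDerivAt_id t).const_mul ε
      exact (h1.exp.const_mul _).add h2
    classical
    refine image_le_of_liminf_slope_right_lt_deriv_boundary (f := fun t => ‖w t‖)
      (f' := fun t => if ‖w t‖ = ‖w 0‖ * Real.exp (-2 * K * t) + ε * t then -2 * K * ‖w t‖
        else ‖w' t‖) (a := 0) (b := T) hwc.norm.continuousOn ?_ (by simp) hBd ?_ ⟨hT, le_rfl⟩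
    · intro t ht r hr
      split_ifs at hr with hcase
      · refine hslope t ?_ r hr
        rw [hcase]
        have h1 : Real.exp (-2 * K * t) ≤ 1 := Real.exp_le_one_iff.2 (by nlinarith [ht.1])
        have h2 := mul_le_mul_of_nonneg_left h1 (norm_nonneg (w 0))
        have h3 := mul_le_mul_of_nonneg_left ht.2.le hε.le
        linarith
      · have := (hw t).hasDerivWithinAt (s := Ici t) |>.liminf_right_slope_norm_le hr
        simpa only [slope_def_field, div_eq_inv_mul] using this
    · intro t ht hcase
      have hcase' : ‖w t‖ = ‖w 0‖ * Real.exp (-2 * K * t) + ε * t := hcase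
      simp only [if_pos hcase']
      rw [hcase']
      have : 0 ≤ K * (ε * t) := mul_nonneg hK (mul_nonneg hε.le ht.1)
      nlinarith
  have hlim : Tendsto (fun ε : ℝ => ‖w 0‖ * Real.exp (-2 * K * T) + ε * T) (𝓝[>] 0)
      (𝓝 (‖w 0‖ * Real.exp (-2 * K * T) + 0 * T)) := by
    refine Tendsto.mono_left (Continuous.tendsto (by fun_prop) 0) nhdsWithin_le_nhds
  have hsmall : ∀ᶠ ε : ℝ in 𝓝[>] 0, ‖w 0‖ + ε * T < α / 2 := by
    have h : Tendsto (fun ε : ℝ => ‖w 0‖ + ε * T) (𝓝[>] 0) (𝓝 (‖w 0‖ + 0 * T)) :=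
      Tendsto.mono_left (Continuous.tendsto (by fun_prop) 0) nhdsWithin_le_nhds
    refine h.eventually_lt_const ?_
    rw [zero_mul, add_zero]
    exact h0
  have hfin : ‖w T‖ ≤ ‖w 0‖ * Real.exp (-2 * K * T) + 0 * T := by
    refine ge_of_tendsto hlim ?_
    filter_upwards [hsmall, self_mem_nhdsWithin] with ε h1 h2
    exact main ε h2 h1.le
  rw [zero_mul, add_zero, mul_comm] at hfin
  exact hfin

end WeightedGraph

end MHEProof

/-- On a weighted graph with bounded geometry (constant `α > 0`)
satisfying `CD(K,∞)` with `K ≥ 0`, for any `u₀ ∈ L^∞(V,μ)` with `‖Γ u₀‖_∞ < α/2`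
there is a unique solution `u : [0,∞) → L^∞(V,μ)` of the modified heat equation
with initial data `u₀`, and it satisfies `‖Γ (u t)‖_∞ ≤ e^{-2Kt} ‖Γ u₀‖_∞`. -/
theorem modified_heat_equation_global_solution {V : Type*} [Countable V]
    (G : WeightedGraph V) (α K : ℝ) (hbg : G.BoundedGeometry α) (hK : 0 ≤ K)
    (hCD : G.CDInfty K) (u₀ : Linf V)
    (h0 : supNorm (G.gamma (fun x => u₀ x)) < α / 2) :
    (∃ u u' : ℝ → Linf V, IsMHESolution G u u' u₀ ∧
      ∀ t : ℝ, 0 ≤ t → supNorm (G.gamma (fun x => u t x)) ≤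
        Real.exp (-2 * K * t) * supNorm (G.gamma (fun x => u₀ x))) ∧
    (∀ u u' v v' : ℝ → Linf V, IsMHESolution G u u' u₀ → IsMHESolution G v v' u₀ →
      ∀ t : ℝ, 0 ≤ t → u t = v t) := by
  constructor
  · obtain ⟨u, hu0, hu⟩ := mhe_global_ode (G.field 1 zero_le_one) _ (Real.toNNReal (1 + (1 / 2) * 1 ^ 2))
      (G.field_lip 1 zero_le_one) (fun x => by
        rw [Real.coe_toNNReal _ (by positivity)]
        exact G.field_norm_le 1 zero_le_one x) u₀
    rw [G.supNorm_gamma] at h0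
    have hdec : ∀ t : ℝ, 0 ≤ t → ‖G.bil (u t) (u t)‖ ≤
        Real.exp (-2 * K * t) * ‖G.bil u₀ u₀‖ := by
      intro t ht
      have := G.gamma_decay α K hbg hK hCD u hu (by rw [hu0]; exact h0) t ht
      rwa [hu0] at this
    have huc : Continuous u := continuous_iff_continuousAt.2 fun t => (hu t).continuousAt
    refine ⟨u, fun t => G.field 1 zero_le_one (u t), ⟨hu0, huc.continuousOn,
      ((G.field_lip 1 zero_le_one).continuous.comp huc).continuousOn, fun t _ => hu t, ?_⟩, ?_⟩
    · intro t ht x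
      refine G.field_eq 1 zero_le_one (u t) x (G.osc_le_one α hbg (u t) ?_ x)
      have h1 : Real.exp (-2 * K * t) ≤ 1 := Real.exp_le_one_iff.2 (by nlinarith)
      have h2 := mul_le_mul_of_nonneg_right h1 (norm_nonneg (G.bil u₀ u₀))
      linarith [hdec t ht.le]
    · intro t ht
      rw [G.supNorm_gamma, G.supNorm_gamma]
      exact hdec t ht
  · intro u u' v v' hu hv T hT
    have huc := hu.cont.mono (Set.Icc_subset_Ici_self : Set.Icc 0 T ⊆ _)
    have hvc := hv.cont.mono (Set.Icc_subset_Ici_self : Set.Icc 0 T ⊆ _)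
    obtain ⟨A, hA⟩ := isCompact_Icc.exists_bound_of_continuousOn huc
    obtain ⟨B, hB⟩ := isCompact_Icc.exists_bound_of_continuousOn hvc
    have hR : 0 ≤ 2 * max A B := by
      have := (norm_nonneg _).trans (hA 0 ⟨le_rfl, hT⟩)
      have := le_max_left A B
      linarith
    refine mhe_ode_unique (G.field (2 * max A B) hR) _ (G.field_lip _ hR) u v T huc hvc ?_ ?_
      (hu.init.trans hv.init.symm) ⟨hT, le_rfl⟩
    · intro t ht
      have e : u' t = G.field (2 * max A B) hR (u t) := by
        ext x
        rw [hu.eqn t ht.1 x, G.field_eq _ hR]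
        intro y _
        have h1 := hA t ⟨ht.1.le, ht.2.le⟩
        have h2 := le_max_left A B
        linarith [Linf_osc_le (u t) x y]
      rw [← e]
      exact hu.hasDeriv t ht.1
    · intro t ht
      have e : v' t = G.field (2 * max A B) hR (v t) := by
        ext x
        rw [hv.eqn t ht.1 x, G.field_eq _ hR]
        intro y _
        have h1 := hB t ⟨ht.1.le, ht.2.le⟩
        have h2 := le_max_right A B
        linarith [Linf_osc_le (v t) x y]
      rw [← e]
      exact hv.hasDeriv t ht.1
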